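/- Let n ≥ 1 be an integer. For all subsets S, T ⊆ {1,…,n} there exist natural numbers N_{S,T}^U indexed by subsets U ⊆ {1,…,n}, each of which is either zero or a power of 2, such that d_S · d_T = ∑_{U ⊆ {1,…,n}} N_{S,T}^U · d_U. -/

import Mathlib

open Real

/-- `c j = 2·cos(π/2^(j+1))` (so `c 0 = 0`). -/
noncomputable def c (j : ℕ) : ℝ := 2 * Real.cos (π / 2 ^ (j + 1))

/-- `d S = ∏_{j ∈ S} c j` (so `d ∅ = 1`). -/
noncomputable def d (S : Finset ℕ) : ℝ := ∏ j ∈ S, c j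

/-!
Write `d S * d T` as `∏ j, c j ^ e j` with `e j ≤ 2` and build the product up from `j = 1`. A
squared factor is `c (j + 1) ^ 2 = 2 + c j`, so it only feeds back to index `j`. Hence the
induction carries two facts about the partial product `p` up to index `n`: both `p` and
`p * c (n + 1) ^ 2` are combinations over `{1, …, n}`. For a new exponent `k ≤ 2` at
`y = c (n + 1)`, both `p * y ^ k` and `p * y ^ k * (2 + y)` have the form `u + v * y` with `u`, `v`
among `0`, `p`, `2 * p`, `p * y ^ 2` and `2 * (p * y ^ 2)`; the coefficients of `u` and of `v * y`
belong to different sets `U`, so they never get added together.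
-/

section TwoPowComb

variable {ι R : Type*} [CommSemiring R] {f : ι → R} {s : Finset ι} {x y : R}

/-- `x` is a combination of the products `∏ j ∈ U, f j`, `U ⊆ s`, in which every coefficient is zero
or a power of two. The coefficients `N U` with `U ⊄ s` do not enter the sum. -/
def IsTwoPowComb (f : ι → R) (s : Finset ι) (x : R) : Prop :=
  ∃ N : Finset ι → ℕ,
    (∀ U, N U = 0 ∨ ∃ e : ℕ, N U = 2 ^ e) ∧
    x = ∑ U ∈ s.powerset, (N U : R) * ∏ j ∈ U, f j

namespace IsTwoPowComb

theorem zero : IsTwoPowComb f s 0 :=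
  ⟨fun _ => 0, fun _ => Or.inl rfl, by simp⟩

theorem one : IsTwoPowComb f s 1 := by
  classical
  refine ⟨fun U => if U = ∅ then 1 else 0, fun U => ?_, by simp⟩
  beta_reduce
  split_ifs
  exacts [Or.inr ⟨0, rfl⟩, Or.inl rfl]

theorem two_mul (hx : IsTwoPowComb f s x) : IsTwoPowComb f s (2 * x) := by
  obtain ⟨N, hN, rfl⟩ := hx
  refine ⟨fun U => 2 * N U, fun U => (hN U).imp ?_ ?_, ?_⟩
  · exact fun hU => mul_eq_zero_of_right 2 hU
  · exact fun ⟨e, hU⟩ => ⟨e + 1, by simp only [hU, pow_succ']⟩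
  · simp only [Finset.mul_sum, Nat.cast_mul, Nat.cast_ofNat, mul_assoc]

variable [DecidableEq ι] {a : ι}

theorem add_mul_insert (ha : a ∉ s) (hx : IsTwoPowComb f s x) (hy : IsTwoPowComb f s y) :
    IsTwoPowComb f (insert a s) (x + y * f a) := by
  obtain ⟨M, hM, rfl⟩ := hx
  obtain ⟨N, hN, rfl⟩ := hy
  refine ⟨fun U => if a ∈ U then N (U.erase a) else M U, fun U => ?_, ?_⟩
  · beta_reduce
    split_ifs
    exacts [hN _, hM _]
  rw [Finset.sum_powerset_insert ha, Finset.sum_mul]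
  have notMem {U : Finset ι} (hU : U ∈ s.powerset) : a ∉ U :=
    fun haU => ha (Finset.mem_powerset.1 hU haU)
  congr 1 <;> refine Finset.sum_congr rfl fun U hU => ?_ <;> beta_reduce
  · rw [if_neg (notMem hU)]
  · rw [if_pos (Finset.mem_insert_self a U), Finset.erase_insert (notMem hU),
      Finset.prod_insert (notMem hU), mul_assoc, mul_comm (f a)]

variable {k : ℕ}

theorem mul_pow_insert (ha : a ∉ s) (hx : IsTwoPowComb f s x)
    (hxa : IsTwoPowComb f s (x * f a ^ 2)) (hk : k ≤ 2) :
    IsTwoPowComb f (insert a s) (x * f a ^ k) := by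
  interval_cases k
  · simpa using add_mul_insert ha hx zero
  · simpa using add_mul_insert ha zero hx
  · simpa using add_mul_insert ha hxa zero

theorem mul_pow_mul_two_add_insert (ha : a ∉ s) (hx : IsTwoPowComb f s x)
    (hxa : IsTwoPowComb f s (x * f a ^ 2)) (hk : k ≤ 2) :
    IsTwoPowComb f (insert a s) (x * f a ^ k * (2 + f a)) := by
  interval_cases k
  · convert add_mul_insert ha hx.two_mul hx using 1
    ring
  · convert add_mul_insert ha hxa hx.two_mul using 1
    ring
  · convert add_mul_insert ha hxa.two_mul hxa using 1
    ring

end IsTwoPowComb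

end TwoPowComb

theorem prod_eq_prod_pow_ite_mem {ι M : Type*} [CommMonoid M] [DecidableEq ι] {s t : Finset ι}
    (hst : s ⊆ t) (f : ι → M) : ∏ j ∈ s, f j = ∏ j ∈ t, f j ^ (if j ∈ s then 1 else 0) := by
  simp only [pow_ite, pow_one, pow_zero, Finset.prod_ite_mem, Finset.inter_eq_right.2 hst]

section Recurrence

variable {R : Type*} [CommSemiring R] {f : ℕ → R}

theorem isTwoPowComb_prod_pow_and_mul_sq (hf₀ : f 0 = 0) (hf : ∀ j, f (j + 1) ^ 2 = 2 + f j)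
    {e : ℕ → ℕ} (he : ∀ j, e j ≤ 2) (n : ℕ) :
    IsTwoPowComb f (Finset.Icc 1 n) (∏ j ∈ Finset.Icc 1 n, f j ^ e j) ∧
      IsTwoPowComb f (Finset.Icc 1 n) ((∏ j ∈ Finset.Icc 1 n, f j ^ e j) * f (n + 1) ^ 2) := by
  induction n with
  | zero =>
    have one : IsTwoPowComb f ∅ 1 := .one
    simpa [hf, hf₀] using And.intro one one.two_mul
  | succ n ih =>
    obtain ⟨hp, hp_sq⟩ := ih
    have notMem : n + 1 ∉ Finset.Icc 1 n := by simp
    rw [hf, Finset.prod_Icc_succ_top (by omega),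
      ← Finset.insert_Icc_right_eq_Icc_add_one (by omega)]
    exact ⟨.mul_pow_insert notMem hp hp_sq (he _),
      .mul_pow_mul_two_add_insert notMem hp hp_sq (he _)⟩

theorem stmt_4_general (hf₀ : f 0 = 0) (hf : ∀ j, f (j + 1) ^ 2 = 2 + f j) {n : ℕ}
    {S T : Finset ℕ} (hS : S ⊆ Finset.Icc 1 n) (hT : T ⊆ Finset.Icc 1 n) :
    IsTwoPowComb f (Finset.Icc 1 n) ((∏ j ∈ S, f j) * ∏ j ∈ T, f j) := by
  rw [prod_eq_prod_pow_ite_mem hS, prod_eq_prod_pow_ite_mem hT, ← Finset.prod_mul_distrib]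
  simp only [← pow_add]
  refine (isTwoPowComb_prod_pow_and_mul_sq hf₀ hf (fun j => ?_) n).1
  split_ifs <;> norm_num

end Recurrence

theorem c_zero : c 0 = 0 := by simp [c]

theorem c_succ_sq (j : ℕ) : c (j + 1) ^ 2 = 2 + c j := by
  have angle_eq : π / 2 ^ (j + 1) = 2 * (π / 2 ^ (j + 1 + 1)) := by
    rw [pow_succ _ (j + 1)]
    field_simp
  rw [c, c, angle_eq, Real.cos_two_mul]
  ring

/-- for `S, T ⊆ {1,…,n}` there are natural numbers `N U`, each zero or a
power of `2`, with `d S · d T = ∑_{U ⊆ {1,…,n}} N U · d U`. -/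
theorem stmt_4 (n : ℕ) (hn : 1 ≤ n) (S T : Finset ℕ)
    (hS : S ⊆ Finset.Icc 1 n) (hT : T ⊆ Finset.Icc 1 n) :
    ∃ N : Finset ℕ → ℕ,
      (∀ U : Finset ℕ, N U = 0 ∨ ∃ e : ℕ, N U = 2 ^ e) ∧
      d S * d T = ∑ U ∈ (Finset.Icc 1 n).powerset, (N U : ℝ) * d U :=
  stmt_4_general c_zero c_succ_sq hS hT
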